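/- Let K be a closed, bounded, convex subset of a real Hilbert space H which is a dense continuously-embedded subspace of a Banach space B. Then K is closed in B. -/

import Mathlib

/-!
In a reflexive space closed, bounded, convex sets are weakly compact, by Banach–Alaoglu and
Hahn–Banach, and Hilbert spaces are reflexive by Riesz representation. A continuous linear map is
weak-to-weak continuous, so it sends such a set to a weakly compact set, which is weakly closed
because the dual of the target separates points, and a fortiori closed.
-/

open NormedSpace

theorem surjective_inclusionInDoubleDual_of_innerProductSpace {𝕜 H : Type*} [RCLike 𝕜]
    [NormedAddCommGroup H] [InnerProductSpace 𝕜 H] [CompleteSpace H] :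
    Function.Surjective (inclusionInDoubleDual 𝕜 H) := by
  intro φ
  let toDual : H ≃L⋆[𝕜] StrongDual 𝕜 H := (InnerProductSpace.toDual 𝕜 H).toContinuousLinearEquiv
  -- `φ ∘ toDual` is conjugate-linear, so its conjugate is a functional on `H`.
  let ψ : StrongDual 𝕜 H :=
    (starL 𝕜 : 𝕜 ≃L⋆[𝕜] 𝕜).toContinuousLinearMap.comp (φ.comp toDual.toContinuousLinearMap)
  refine ⟨toDual.symm ψ, ContinuousLinearMap.ext fun f => ?_⟩
  obtain ⟨y, rfl⟩ := toDual.surjective f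
  calc inner 𝕜 y (toDual.symm ψ) = star (inner 𝕜 (toDual.symm ψ) y) := (inner_conj_symm _ _).symm
    _ = star (ψ y) := congrArg star InnerProductSpace.toDual_symm_apply
    _ = φ (toDual y) := star_star _

theorem surjective_inclusionInDoubleDualWeak {𝕜 E : Type*} [NontriviallyNormedField 𝕜]
    [SeminormedAddCommGroup E] [NormedSpace 𝕜 E]
    (hE : Function.Surjective (inclusionInDoubleDual 𝕜 E)) :
    Function.Surjective (inclusionInDoubleDualWeak 𝕜 E) :=
  StrongDual.toWeakDual.surjective.comp (hE.comp (toWeakSpace 𝕜 E).symm.surjective)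

theorem isCompact_toWeakSpace_image_of_convex {𝕜 E : Type*} [RCLike 𝕜]
    [NormedAddCommGroup E] [NormedSpace 𝕜 E] [NormedSpace ℝ E] [IsScalarTower ℝ 𝕜 E]
    (hE : Function.Surjective (inclusionInDoubleDual 𝕜 E)) {K : Set E} (hKc : IsClosed K)
    (hKb : Bornology.IsBounded K) (hKconv : Convex ℝ K) :
    IsCompact (toWeakSpace 𝕜 E '' K) := by
  have hclosure : closure (toWeakSpace 𝕜 E '' K) = toWeakSpace 𝕜 E '' K := by
    rw [← hKconv.toWeakSpace_closure 𝕜, hKc.closure_eq]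
  rw [← hclosure]
  refine isCompact_closure_of_isBounded 𝕜 E _ ?_ ?_
  · rwa [Set.preimage_image_eq K (toWeakSpace 𝕜 E).injective]
  · simp only [(surjective_inclusionInDoubleDualWeak hE).range_eq, Set.subset_univ]

theorem isClosed_image_of_isCompact_toWeakSpace_image {R E F : Type*}
    [CommRing R] [TopologicalSpace R] [T2Space R] [ContinuousAdd R] [ContinuousConstSMul R R]
    [AddCommMonoid E] [Module R E] [TopologicalSpace E]
    [AddCommGroup F] [Module R F] [TopologicalSpace F] [SeparatingDual R F]
    (j : E →L[R] F) {K : Set E} (hK : IsCompact (toWeakSpace R E '' K)) :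
    IsClosed (j '' K) := by
  have himage : WeakSpace.map j '' (toWeakSpace R E '' K) = toWeakSpace R F '' (j '' K) := by
    simp only [Set.image_image]
    rfl
  have hweak : IsClosed (toWeakSpace R F '' (j '' K)) :=
    himage ▸ (hK.image (WeakSpace.map j).continuous).isClosed
  rw [← Set.preimage_image_eq (j '' K) (toWeakSpace R F).injective]
  exact hweak.preimage (toWeakSpaceCLM R F).continuous

theorem stmt18_general {𝕜 E F : Type*} [RCLike 𝕜]
    [NormedAddCommGroup E] [NormedSpace 𝕜 E] [NormedSpace ℝ E] [IsScalarTower ℝ 𝕜 E]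
    [AddCommGroup F] [Module 𝕜 F] [TopologicalSpace F] [SeparatingDual 𝕜 F]
    (hE : Function.Surjective (inclusionInDoubleDual 𝕜 E)) (j : E →L[𝕜] F)
    {K : Set E} (hKc : IsClosed K) (hKb : Bornology.IsBounded K) (hKconv : Convex ℝ K) :
    IsClosed (j '' K) :=
  isClosed_image_of_isCompact_toWeakSpace_image j
    (isCompact_toWeakSpace_image_of_convex hE hKc hKb hKconv)

/-- Let `H` be a real Hilbert space densely and continuously included (via `j`) in a real
separable Banach space `B`. If `K ⊆ H` is closed, bounded and convex, then its image in
`B` is closed. -/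
theorem stmt18 {B H : Type*}
    [NormedAddCommGroup B] [NormedSpace ℝ B] [CompleteSpace B]
    [TopologicalSpace.SeparableSpace B]
    [NormedAddCommGroup H] [InnerProductSpace ℝ H] [CompleteSpace H]
    (j : H →L[ℝ] B) (hj : Function.Injective j) (hdense : DenseRange j)
    (K : Set H) (hKc : IsClosed K) (hKb : Bornology.IsBounded K) (hKconv : Convex ℝ K) :
    IsClosed (j '' K) :=
  stmt18_general surjective_inclusionInDoubleDual_of_innerProductSpace j hKc hKb hKconv
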